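/- arXiv:2605.16876 — 2 statements merged into one kernel-verified Lean document; each statement's English description precedes it below -/
import Mathlib

section
/- Let ω = (w₁,…,w_m) be a weight vector. There exists ε > 1 (depending on ω and n) such that for all n×n positive definite complex matrices A₁,…,A_m with ε⁻¹I ≤ Aᵢ ≤ εI for every i, the equation Σᵢ₌₁^m wᵢ log(Aᵢ ♯ X⁻¹) = 0 has exactly one positive definite solution X, and this solution satisfies ε⁻¹I ≤ X ≤ εI. -/
/-!
The result holds for strictly positive elements of any unital C⋆-algebra (`abstract_main`), and the
matrix statement is the special case of `Matrix (Fin n) (Fin n) ℂ` with its operator norm.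

*Bounds.* The mean `g = a ♯ x⁻¹` solves the Riccati equation `g a⁻¹ g = x⁻¹`. If `a ≤ ε`, then
`ε⁻¹ g² ≤ x⁻¹`, and operator monotonicity of the logarithm gives `2 log g ≤ log ε - log x`; the
bound from below is symmetric. Averaging over the weights, every solution `x` satisfies
`-log ε ≤ log x ≤ log ε` (`solution_bounds`). In particular every solution is close to `1` when `ε`
is close to `1`.

*Existence and uniqueness.* The map `(a, x) ↦ log (a ♯ x⁻¹)` is strictly differentiable at `(1, 1)`
with derivative `(h, k) ↦ (h - k) / 2`: square root and logarithm agree near `1` with the local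
inverses of squaring and of the exponential (`exists_joint_extension`). Hence, uniformly in the
`aᵢ` near `1`, the map `x ↦ x + 2 ∑ᵢ wᵢ log (aᵢ ♯ x⁻¹)` is a contraction of the self-adjoint part
of a small closed ball around `1`. Its fixed point is a solution, and it is the only one because the
bounds place every solution in that ball.
-/

open Matrix
open scoped ComplexOrder

/-- Functional calculus for Hermitian matrices: apply `f` to the eigenvalues. -/
noncomputable def herm {n : ℕ} (f : ℝ → ℝ) (A : Matrix (Fin n) (Fin n) ℂ) :
    Matrix (Fin n) (Fin n) ℂ :=
  if hA : A.IsHermitian then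
    (hA.eigenvectorUnitary : Matrix (Fin n) (Fin n) ℂ) *
      Matrix.diagonal (fun i => (f (hA.eigenvalues i) : ℂ)) *
      (star (hA.eigenvectorUnitary : Matrix (Fin n) (Fin n) ℂ))
  else 0

/-- Square root of a positive definite matrix. -/
noncomputable def msqrt {n : ℕ} (A : Matrix (Fin n) (Fin n) ℂ) : Matrix (Fin n) (Fin n) ℂ :=
  herm Real.sqrt A

/-- Logarithm of a positive definite matrix. -/
noncomputable def mlog {n : ℕ} (A : Matrix (Fin n) (Fin n) ℂ) : Matrix (Fin n) (Fin n) ℂ :=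
  herm Real.log A

/-- Real power of a positive definite matrix. -/
noncomputable def mpow {n : ℕ} (A : Matrix (Fin n) (Fin n) ℂ) (t : ℝ) :
    Matrix (Fin n) (Fin n) ℂ :=
  herm (fun x => x ^ t) A

/-- Metric geometric mean `A ♯ B = A^{1/2} (A^{-1/2} B A^{-1/2})^{1/2} A^{1/2}`. -/
noncomputable def geom {n : ℕ} (A B : Matrix (Fin n) (Fin n) ℂ) : Matrix (Fin n) (Fin n) ℂ :=
  msqrt A * msqrt ((msqrt A)⁻¹ * B * (msqrt A)⁻¹) * msqrt A

/-- The solution set `Γ(ω; A₁,…,A_m)` of the spectral-geometric-mean equation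
`∑ᵢ wᵢ log(Aᵢ ♯ X⁻¹) = 0` among positive definite matrices. -/
noncomputable def Gamma {m n : ℕ} (w : Fin m → ℝ) (A : Fin m → Matrix (Fin n) (Fin n) ℂ) :
    Set (Matrix (Fin n) (Fin n) ℂ) :=
  {X | X.PosDef ∧ ∑ i, w i • mlog (geom (A i) X⁻¹) = 0}

/-! ### Local extensions of the square root and the logarithm -/

section Abstract

open Filter Topology
open scoped Ring

variable {𝔸 : Type*} [CStarAlgebra 𝔸] [PartialOrder 𝔸]

/-- A map `g` that is only meaningful on strictly positive elements, is continuous at `1` there and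
satisfies `E ∘ g = id` agrees near `1` with the local inverse `S` of `E`. The point is that `S` is
strictly differentiable as a map on the whole algebra, whereas `g` is not: the strictly positive
elements do not form a neighbourhood of `1`. -/
lemma exists_extension {E g : 𝔸 → 𝔸} {E' : 𝔸 ≃L[ℂ] 𝔸} {b : 𝔸}
    (hE : HasStrictFDerivAt E (E' : 𝔸 →L[ℂ] 𝔸) b) (hb : E b = 1)
    (hg : Tendsto g (𝓝[{a | IsStrictlyPositive a}] 1) (𝓝 b))
    (hEg : ∀ a, IsStrictlyPositive a → E (g a) = a) :
    ∃ S : 𝔸 → 𝔸, S 1 = b ∧ HasStrictFDerivAt S (E'.symm : 𝔸 →L[ℂ] 𝔸) 1 ∧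
      ∀ᶠ a in 𝓝 (1 : 𝔸), IsStrictlyPositive a → g a = S a := by
  refine ⟨hE.localInverse E E' b, ?_, ?_, ?_⟩
  · rw [← hb]; exact hE.localInverse_apply_image
  · rw [← hb]; exact hE.to_localInverse
  · have h := eventually_nhdsWithin_iff.1 (hg.eventually hE.eventually_left_inverse)
    filter_upwards [h] with a ha hpos
    rw [← ha hpos, hEg a hpos]

variable [StarOrderedRing 𝔸]

lemma exists_sqrt_extension :
    ∃ S : 𝔸 → 𝔸, S 1 = 1 ∧ HasStrictFDerivAt S ((1 / 2 : ℂ) • ContinuousLinearMap.id ℂ 𝔸) 1 ∧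
      ∀ᶠ a in 𝓝 (1 : 𝔸), IsStrictlyPositive a → CFC.sqrt a = S a := by
  let e : 𝔸 ≃L[ℂ] 𝔸 := ContinuousLinearEquiv.smulLeft (Units.mk0 (2 : ℂ) two_ne_zero)
  have hE : HasStrictFDerivAt (fun a : 𝔸 => a * a) (e : 𝔸 →L[ℂ] 𝔸) 1 := by
    have h := (hasStrictFDerivAt_id (𝕜 := ℂ) (1 : 𝔸)).mul' (hasStrictFDerivAt_id (𝕜 := ℂ) (1 : 𝔸))
    refine (h.congr_fderiv ?_)
    ext x
    simp [e, two_smul, Units.smul_def]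
  have hg : Tendsto CFC.sqrt (𝓝[{a : 𝔸 | IsStrictlyPositive a}] 1) (𝓝 1) := by
    have h := (CFC.continuousOn_sqrt (A := 𝔸)) 1 (by simp)
    have h1 : CFC.sqrt (1 : 𝔸) = 1 := by simp
    have h2 := h.mono (s := {a : 𝔸 | IsStrictlyPositive a}) (fun a ha => ha.nonneg)
    simpa [ContinuousWithinAt, h1] using h2
  obtain ⟨S, h1, h2, h3⟩ := exists_extension hE (by simp) hg
    (fun a ha => CFC.sqrt_mul_sqrt_self a ha.nonneg)
  refine ⟨S, h1, h2.congr_fderiv ?_, h3⟩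
  ext x
  apply e.injective
  simp [e, Units.smul_def]

lemma exists_log_extension :
    ∃ L : 𝔸 → 𝔸, L 1 = 0 ∧ HasStrictFDerivAt L (ContinuousLinearMap.id ℂ 𝔸) 1 ∧
      ∀ᶠ a in 𝓝 (1 : 𝔸), IsStrictlyPositive a → CFC.log a = L a := by
  have hE : HasStrictFDerivAt (NormedSpace.exp : 𝔸 → 𝔸)
      ((ContinuousLinearEquiv.refl ℂ 𝔸 : 𝔸 ≃L[ℂ] 𝔸) : 𝔸 →L[ℂ] 𝔸) 0 :=
    hasStrictFDerivAt_exp_zero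
  have hg : Tendsto CFC.log (𝓝[{a : 𝔸 | IsStrictlyPositive a}] 1) (𝓝 0) := by
    have h := (CFC.continuousOn_log (A := 𝔸)) 1 ⟨.one _, isUnit_one⟩
    have h2 := h.mono (s := {a : 𝔸 | IsStrictlyPositive a})
      (fun a ha => ⟨ha.isSelfAdjoint, ha.isUnit⟩)
    simpa [ContinuousWithinAt] using h2
  obtain ⟨S, h1, h2, h3⟩ := exists_extension hE (by simp) hg
    (fun a ha => CFC.exp_log a ha)
  exact ⟨S, h1, h2, h3⟩

/-! ### The geometric mean in a C⋆-algebra -/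

/-- The metric geometric mean `a ♯ b` of strictly positive elements of a C⋆-algebra. The inverse is
`Ring.inverse`, and the formula is only meaningful for strictly positive `a` and `b`. -/
noncomputable def cgeom (a b : 𝔸) : 𝔸 :=
  CFC.sqrt a * CFC.sqrt ((CFC.sqrt a)⁻¹ʳ * b * (CFC.sqrt a)⁻¹ʳ) * CFC.sqrt a

lemma cgeom_inner_pos {a b : 𝔸} (ha : IsStrictlyPositive a) (hb : IsStrictlyPositive b) :
    IsStrictlyPositive ((CFC.sqrt a)⁻¹ʳ * b * (CFC.sqrt a)⁻¹ʳ) := by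
  have h := (IsStrictlyPositive.sqrt a ha).ringInverse
  exact IsStrictlyPositive.conjugate_of_isUnit_of_isSelfAdjoint _ _ h.isUnit h.isSelfAdjoint hb

lemma cgeom_pos {a b : 𝔸} (ha : IsStrictlyPositive a) (hb : IsStrictlyPositive b) :
    IsStrictlyPositive (cgeom a b) := by
  have h := IsStrictlyPositive.sqrt a ha
  exact IsStrictlyPositive.conjugate_of_isUnit_of_isSelfAdjoint _ _ h.isUnit h.isSelfAdjoint
    (IsStrictlyPositive.sqrt _ (cgeom_inner_pos ha hb))

/-- `a ♯ b` solves the Riccati equation `g a⁻¹ g = b`. -/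
lemma cgeom_riccati {a b : 𝔸} (ha : IsStrictlyPositive a) (hb : IsStrictlyPositive b) :
    cgeom a b * a⁻¹ʳ * cgeom a b = b := by
  have hs := IsStrictlyPositive.sqrt a ha
  have hq := CFC.sqrt_mul_sqrt_self _ (cgeom_inner_pos ha hb).nonneg
  have hss := CFC.sqrt_mul_sqrt_self a ha.nonneg
  unfold cgeom
  generalize CFC.sqrt ((CFC.sqrt a)⁻¹ʳ * b * (CFC.sqrt a)⁻¹ʳ) = q at *
  generalize CFC.sqrt a = s at *
  subst hss
  obtain ⟨u, rfl⟩ := hs.isUnit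
  have hu : ((u : 𝔸) * u)⁻¹ʳ = (↑u⁻¹ : 𝔸) * ↑u⁻¹ := by
    rw [← Units.val_mul, Ring.inverse_unit, _root_.mul_inv_rev, Units.val_mul]
  rw [Ring.inverse_unit] at hq
  rw [hu]
  calc (u : 𝔸) * q * u * (↑u⁻¹ * ↑u⁻¹) * (u * q * u) = u * (q * q) * u := by
        simp [mul_assoc]
    _ = b := by rw [hq]; simp [mul_assoc]

/-- Near `(1, 1)`, the map `(a, x) ↦ log (a ♯ x⁻¹)` extends from the strictly positive pairs to a
map with strict derivative `(h, k) ↦ (h - k) / 2`. -/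
lemma exists_joint_extension :
    ∃ f : 𝔸 × 𝔸 → 𝔸, f (1, 1) = 0 ∧
      HasStrictFDerivAt f ((1 / 2 : ℂ) •
        (ContinuousLinearMap.fst ℂ 𝔸 𝔸 - ContinuousLinearMap.snd ℂ 𝔸 𝔸)) (1, 1) ∧
      ∀ᶠ p in 𝓝 ((1, 1) : 𝔸 × 𝔸), IsStrictlyPositive p.1 → IsStrictlyPositive p.2 →
        CFC.log (cgeom p.1 p.2⁻¹ʳ) = f p := by
  obtain ⟨S, hS1, hS, hSe⟩ := exists_sqrt_extension (𝔸 := 𝔸)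
  obtain ⟨L, hL1, hL, hLe⟩ := exists_log_extension (𝔸 := 𝔸)
  have hI : HasStrictFDerivAt (Ring.inverse : 𝔸 → 𝔸) (-ContinuousLinearMap.id ℂ 𝔸) 1 := by
    refine (hasStrictFDerivAt_ringInverse (𝕜 := ℂ) (1 : 𝔸ˣ)).congr_fderiv ?_
    ext x; simp
  have hI1 : (1 : 𝔸)⁻¹ʳ = 1 := Ring.inverse_one _
  let s : 𝔸 × 𝔸 → 𝔸 := fun p => S p.1
  let t : 𝔸 × 𝔸 → 𝔸 := fun p => (s p)⁻¹ʳ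
  let c : 𝔸 × 𝔸 → 𝔸 := fun p => t p * p.2⁻¹ʳ * t p
  let q : 𝔸 × 𝔸 → 𝔸 := fun p => S (c p)
  let g : 𝔸 × 𝔸 → 𝔸 := fun p => s p * q p * s p
  have s1 : s (1, 1) = 1 := hS1
  have t1 : t (1, 1) = 1 := by simp [t, s1]
  have c1 : c (1, 1) = 1 := by simp [c, t1]
  have q1 : q (1, 1) = 1 := by simp [q, c1, hS1]
  have g1 : g (1, 1) = 1 := by simp [g, s1, q1]
  have ds : HasStrictFDerivAt s ((1 / 2 : ℂ) • ContinuousLinearMap.fst ℂ 𝔸 𝔸) (1, 1) :=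
    (HasStrictFDerivAt.comp ((1, 1) : 𝔸 × 𝔸) (g := S) (f := Prod.fst) hS
      hasStrictFDerivAt_fst).congr_fderiv (by ext <;> simp)
  have dt : HasStrictFDerivAt t (-((1 / 2 : ℂ) • ContinuousLinearMap.fst ℂ 𝔸 𝔸)) (1, 1) :=
    (HasStrictFDerivAt.comp ((1, 1) : 𝔸 × 𝔸) (g := Ring.inverse) (f := s) (by rw [s1]; exact hI)
      ds).congr_fderiv (by ext <;> simp)
  have di : HasStrictFDerivAt (fun p : 𝔸 × 𝔸 => p.2⁻¹ʳ)
      (-ContinuousLinearMap.snd ℂ 𝔸 𝔸) (1, 1) :=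
    (HasStrictFDerivAt.comp ((1, 1) : 𝔸 × 𝔸) (g := Ring.inverse) (f := Prod.snd) hI
      hasStrictFDerivAt_snd).congr_fderiv (by ext <;> simp)
  have dc : HasStrictFDerivAt c
      (-(ContinuousLinearMap.fst ℂ 𝔸 𝔸 + ContinuousLinearMap.snd ℂ 𝔸 𝔸)) (1, 1) := by
    refine ((dt.mul' di).mul' dt).congr_fderiv ?_
    ext x
    · simp [t1, ← two_smul ℂ]
    · simp [t1]
  have dq : HasStrictFDerivAt q ((1 / 2 : ℂ) •
      (-(ContinuousLinearMap.fst ℂ 𝔸 𝔸 + ContinuousLinearMap.snd ℂ 𝔸 𝔸))) (1, 1) :=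
    (HasStrictFDerivAt.comp ((1, 1) : 𝔸 × 𝔸) (g := S) (f := c) (by rw [c1]; exact hS)
      dc).congr_fderiv (by ext <;> simp)
  have dg : HasStrictFDerivAt g ((1 / 2 : ℂ) •
        (ContinuousLinearMap.fst ℂ 𝔸 𝔸 - ContinuousLinearMap.snd ℂ 𝔸 𝔸)) (1, 1) := by
    refine ((ds.mul' dq).mul' ds).congr_fderiv ?_
    ext x <;> simp [s1, q1]
  have df := (HasStrictFDerivAt.comp ((1, 1) : 𝔸 × 𝔸) (g := L) (f := g) (by rw [g1]; exact hL) dg)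
  refine ⟨fun p => L (g p), by simp [g1, hL1], df.congr_fderiv (by ext <;> simp), ?_⟩
  have e1 : ∀ᶠ p in 𝓝 ((1, 1) : 𝔸 × 𝔸), IsStrictlyPositive p.1 → CFC.sqrt p.1 = S p.1 :=
    (continuous_fst.tendsto ((1, 1) : 𝔸 × 𝔸)).eventually hSe
  have e2 : ∀ᶠ p in 𝓝 ((1, 1) : 𝔸 × 𝔸), IsStrictlyPositive (c p) → CFC.sqrt (c p) = S (c p) := by
    have h := dc.continuousAt.tendsto
    rw [c1] at h
    exact h.eventually hSe
  have e3 : ∀ᶠ p in 𝓝 ((1, 1) : 𝔸 × 𝔸), IsStrictlyPositive (g p) → CFC.log (g p) = L (g p) := by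
    have h := dg.continuousAt.tendsto
    rw [g1] at h
    exact h.eventually hLe
  filter_upwards [e1, e2, e3] with p h1 h2 h3 hp1 hp2
  have hc : c p = (CFC.sqrt p.1)⁻¹ʳ * p.2⁻¹ʳ * (CFC.sqrt p.1)⁻¹ʳ := by
    simp only [c, t, s, h1 hp1]
  have hg : g p = cgeom p.1 p.2⁻¹ʳ := by
    have hcp : IsStrictlyPositive (c p) := hc ▸ cgeom_inner_pos hp1 hp2.ringInverse
    rw [cgeom, ← hc, h2 hcp, h1 hp1]
  rw [← hg]
  exact h3 (hg ▸ cgeom_pos hp1 hp2.ringInverse)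


/-! ### A priori bounds on solutions -/

lemma log_inverse {x : 𝔸} (hx : IsStrictlyPositive x) : CFC.log x⁻¹ʳ = -CFC.log x := by
  have h : x⁻¹ʳ = NormedSpace.exp (-CFC.log x) := by
    conv_lhs => rw [← CFC.exp_log x hx]
    let : NormedAlgebra ℚ 𝔸 := NormedAlgebra.restrictScalars ℚ ℝ 𝔸
    exact Ring.inverse_exp _
  rw [h, CFC.log_exp _ IsSelfAdjoint.log.neg]

lemma inverse_algebraMap {𝔹 : Type*} [Ring 𝔹] [Algebra ℝ 𝔹] {ε : ℝ} (hε : 0 < ε) :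
    (algebraMap ℝ 𝔹 ε)⁻¹ʳ = algebraMap ℝ 𝔹 ε⁻¹ := by
  have hu : IsUnit (algebraMap ℝ 𝔹 ε) := (IsUnit.mk0 ε hε.ne').map (algebraMap ℝ 𝔹)
  rw [← one_mul (Ring.inverse _), eq_comm, Ring.eq_mul_inverse_iff_mul_eq _ _ _ hu, ← map_mul,
    inv_mul_cancel₀ hε.ne', map_one]

lemma log_smul_sq {g : 𝔸} (hg : IsStrictlyPositive g) {ε : ℝ} (hε : 0 < ε) :
    CFC.log (g * algebraMap ℝ 𝔸 ε⁻¹ * g) =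
      (2 : ℝ) • CFC.log g - algebraMap ℝ 𝔸 (Real.log ε) := by
  have h1 : g * algebraMap ℝ 𝔸 ε⁻¹ * g = ε⁻¹ • g ^ 2 := by
    rw [← Algebra.commutes, mul_assoc, ← sq, Algebra.smul_def]
  have h2 : IsStrictlyPositive (g ^ 2) := by
    have := IsStrictlyPositive.conjugate_of_isUnit_of_isSelfAdjoint (1 : 𝔸) g hg.isUnit
      hg.isSelfAdjoint (by simp)
    simpa [sq] using this
  rw [h1, CFC.log_smul' _ (inv_pos.2 hε) h2, CFC.log_pow' 2 g hg, Real.log_inv, map_neg,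
    ofNat_smul_eq_nsmul ℝ 2 (CFC.log g)]
  abel

lemma isStrictlyPositive_mul_algebraMap_mul {g : 𝔸} (hg : IsStrictlyPositive g) {c : ℝ}
    (hc : 0 < c) : IsStrictlyPositive (g * algebraMap ℝ 𝔸 c * g) :=
  IsStrictlyPositive.conjugate_of_isUnit_of_isSelfAdjoint _ g hg.isUnit
      hg.isSelfAdjoint (isStrictlyPositive_algebraMap hc)

/-- With `g = a ♯ x⁻¹`, the bound `a ≤ ε` and the Riccati equation give `ε⁻¹ g² ≤ g a⁻¹ g = x⁻¹`;
the claim follows because the logarithm is operator monotone. -/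
lemma log_cgeom_le {a x : 𝔸} (ha : IsStrictlyPositive a) (hx : IsStrictlyPositive x) {ε : ℝ}
    (hε : 0 < ε) (h : a ≤ algebraMap ℝ 𝔸 ε) :
    (2 : ℝ) • CFC.log (cgeom a x⁻¹ʳ) ≤ algebraMap ℝ 𝔸 (Real.log ε) - CFC.log x := by
  have hg := cgeom_pos ha hx.ringInverse
  have hr := cgeom_riccati ha hx.ringInverse
  set g := cgeom a x⁻¹ʳ
  have h1 : algebraMap ℝ 𝔸 ε⁻¹ ≤ a⁻¹ʳ := by
    rw [← inverse_algebraMap hε]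
    exact CStarAlgebra.ringInverse_le_ringInverse h ha
  have h2 : g * algebraMap ℝ 𝔸 ε⁻¹ * g ≤ x⁻¹ʳ := by
    rw [← hr]
    exact hg.isSelfAdjoint.conjugate_le_conjugate h1
  have h3 := CFC.log_le_log h2 (isStrictlyPositive_mul_algebraMap_mul hg (inv_pos.2 hε))
  rw [log_inverse hx, log_smul_sq hg hε, sub_le_iff_le_add] at h3
  rwa [sub_eq_neg_add]

lemma le_log_cgeom {a x : 𝔸} (ha : IsStrictlyPositive a) (hx : IsStrictlyPositive x) {ε : ℝ}
    (hε : 0 < ε) (h : algebraMap ℝ 𝔸 ε ≤ a) :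
    algebraMap ℝ 𝔸 (Real.log ε) - CFC.log x ≤ (2 : ℝ) • CFC.log (cgeom a x⁻¹ʳ) := by
  have hg := cgeom_pos ha hx.ringInverse
  have hr := cgeom_riccati ha hx.ringInverse
  set g := cgeom a x⁻¹ʳ
  have h1 : a⁻¹ʳ ≤ algebraMap ℝ 𝔸 ε⁻¹ := by
    rw [← inverse_algebraMap hε]
    exact CStarAlgebra.ringInverse_le_ringInverse h (isStrictlyPositive_algebraMap hε)
  have h2 : x⁻¹ʳ ≤ g * algebraMap ℝ 𝔸 ε⁻¹ * g := by
    rw [← hr]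
    exact hg.isSelfAdjoint.conjugate_le_conjugate h1
  have h3 := CFC.log_le_log h2 hx.ringInverse
  rw [log_inverse hx, log_smul_sq hg hε, le_sub_iff_add_le] at h3
  rwa [sub_eq_neg_add]

lemma le_algebraMap_of_log_le {x : 𝔸} (hx : IsStrictlyPositive x) {ε : ℝ} (hε : 0 < ε)
    (h : CFC.log x ≤ algebraMap ℝ 𝔸 (Real.log ε)) : x ≤ algebraMap ℝ 𝔸 ε := by
  have hsp : ∀ t ∈ spectrum ℝ x, 0 < t := fun t ht => hx.spectrum_pos ht
  have hc : ContinuousOn Real.log (spectrum ℝ x) :=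
    Real.continuousOn_log.mono fun t ht => (hsp t ht).ne'
  rw [le_algebraMap_iff_spectrum_le (a := x) hx.isSelfAdjoint]
  intro t ht
  have := (cfc_le_algebraMap_iff Real.log _ x hc hx.isSelfAdjoint).1 h t ht
  exact (Real.log_le_log_iff (hsp t ht) hε).1 this

lemma algebraMap_le_of_le_log {x : 𝔸} (hx : IsStrictlyPositive x) {ε : ℝ} (hε : 0 < ε)
    (h : algebraMap ℝ 𝔸 (Real.log ε) ≤ CFC.log x) : algebraMap ℝ 𝔸 ε ≤ x := by
  have hsp : ∀ t ∈ spectrum ℝ x, 0 < t := fun t ht => hx.spectrum_pos ht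
  have hc : ContinuousOn Real.log (spectrum ℝ x) :=
    Real.continuousOn_log.mono fun t ht => (hsp t ht).ne'
  rw [algebraMap_le_iff_le_spectrum (a := x) hx.isSelfAdjoint]
  intro t ht
  have := (algebraMap_le_cfc_iff Real.log _ x hc hx.isSelfAdjoint).1 h t ht
  exact (Real.log_le_log_iff hε (hsp t ht)).1 this

/-- Averaging the bounds on `2 log (a i ♯ x⁻¹)` leaves `log l ≤ log x ≤ log u`. -/
lemma solution_bounds {ι : Type*} [Fintype ι] {w : ι → ℝ} (hw : ∀ i, 0 < w i)
    (hw1 : ∑ i, w i = 1) {a : ι → 𝔸} (ha : ∀ i, IsStrictlyPositive (a i)) {x : 𝔸}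
    (hx : IsStrictlyPositive x) (hsol : ∑ i, w i • CFC.log (cgeom (a i) x⁻¹ʳ) = 0)
    {l u : ℝ} (hl : 0 < l) (hu : 0 < u)
    (h : ∀ i, algebraMap ℝ 𝔸 l ≤ a i ∧ a i ≤ algebraMap ℝ 𝔸 u) :
    algebraMap ℝ 𝔸 l ≤ x ∧ x ≤ algebraMap ℝ 𝔸 u := by
  have hsol2 : ∑ i, w i • ((2 : ℝ) • CFC.log (cgeom (a i) x⁻¹ʳ)) = 0 := by
    simp_rw [smul_comm _ (2 : ℝ), ← Finset.smul_sum, hsol, smul_zero]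
  have hconst (b : 𝔸) : ∑ i, w i • b = b := by rw [← Finset.sum_smul, hw1, one_smul]
  constructor
  · apply algebraMap_le_of_le_log hx hl
    have h1 := Finset.sum_le_sum fun i (_ : i ∈ Finset.univ) =>
      smul_le_smul_of_nonneg_left (le_log_cgeom (ha i) hx hl (h i).1) (hw i).le
    rw [hconst, hsol2] at h1
    exact sub_nonpos.1 h1
  · apply le_algebraMap_of_log_le hx hu
    have h1 := Finset.sum_le_sum fun i (_ : i ∈ Finset.univ) =>
      smul_le_smul_of_nonneg_left (log_cgeom_le (ha i) hx hu (h i).2) (hw i).le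
    rw [hconst, hsol2] at h1
    exact sub_nonneg.1 h1

/-! ### Existence and uniqueness by contraction -/

lemma norm_sub_one_le {x : 𝔸} {δ : ℝ} (hδ : 0 < δ) (h1 : algebraMap ℝ 𝔸 (1 + δ)⁻¹ ≤ x)
    (h2 : x ≤ algebraMap ℝ 𝔸 (1 + δ)) : ‖x - 1‖ ≤ 3 * δ := by
  have hinv : 1 - δ ≤ (1 + δ)⁻¹ := by
    rw [← sub_nonneg]
    have : (1 + δ)⁻¹ - (1 - δ) = δ ^ 2 * (1 + δ)⁻¹ := by field_simp; ring
    rw [this]; positivity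
  have h3 : algebraMap ℝ 𝔸 (1 - δ) ≤ x := (algebraMap_mono 𝔸 hinv).trans h1
  have h4 : ‖x - algebraMap ℝ 𝔸 (1 - δ)‖ ≤ 2 * δ := by
    rw [CStarAlgebra.norm_le_iff_le_algebraMap _ (by positivity) (sub_nonneg.2 h3),
      sub_le_iff_le_add, ← map_add]
    convert h2 using 2; ring
  have h5 : ‖algebraMap ℝ 𝔸 δ‖ ≤ δ := by
    rw [CStarAlgebra.norm_le_iff_le_algebraMap _ hδ.le (algebraMap_nonneg 𝔸 hδ.le)]
  calc ‖x - 1‖ = ‖(x - algebraMap ℝ 𝔸 (1 - δ)) - algebraMap ℝ 𝔸 δ‖ := by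
        congr 1; rw [map_sub, map_one]; abel
    _ ≤ 2 * δ + δ := (norm_sub_le _ _).trans (add_le_add h4 h5)
    _ = 3 * δ := by ring

lemma isStrictlyPositive_of_norm_sub_one_le {x : 𝔸} (hx : IsSelfAdjoint x)
    (h : ‖x - 1‖ ≤ 1 / 2) : IsStrictlyPositive x := by
  have h1 : 1 - x ≤ algebraMap ℝ 𝔸 ‖1 - x‖ :=
    IsSelfAdjoint.le_algebraMap_norm_self ((IsSelfAdjoint.one _).sub hx)
  have h2 : 1 - x ≤ algebraMap ℝ 𝔸 (1 / 2) :=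
    h1.trans (algebraMap_mono 𝔸 (by rwa [norm_sub_rev]))
  refine (isStrictlyPositive_algebraMap (A := 𝔸) (c := (1 / 2 : ℝ)) (by norm_num)).of_le ?_
  rw [sub_le_comm] at h2
  refine le_trans (le_of_eq ?_) h2
  rw [← map_one (algebraMap ℝ 𝔸), ← map_sub]; norm_num

/-- The quantitative content of `exists_joint_extension`: near `1`, and uniformly in `a`, the map
`x ↦ log (a ♯ x⁻¹)` differs from `x ↦ -x / 2` by a `1/4`-Lipschitz map, and its value at `x = 1` is
as small as the contraction argument on the ball of radius `r` requires. -/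
lemma exists_radius : ∃ r : ℝ, 0 < r ∧ r ≤ 1 / 2 ∧
    (∀ a x y : 𝔸, IsStrictlyPositive a → IsStrictlyPositive x → IsStrictlyPositive y →
      ‖a - 1‖ ≤ r → ‖x - 1‖ ≤ r → ‖y - 1‖ ≤ r →
      ‖CFC.log (cgeom a x⁻¹ʳ) - CFC.log (cgeom a y⁻¹ʳ) + (1 / 2 : ℝ) • (x - y)‖
        ≤ 1 / 4 * ‖x - y‖) ∧
    ∃ δ : ℝ, 0 < δ ∧ δ ≤ r ∧ ∀ a : 𝔸, IsStrictlyPositive a → ‖a - 1‖ ≤ δ →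
      ‖CFC.log (cgeom a (1 : 𝔸)⁻¹ʳ)‖ ≤ r / 4 := by
  obtain ⟨f, f1, df, hf⟩ := exists_joint_extension (𝔸 := 𝔸)
  obtain ⟨s, hs, happ⟩ := df.approximates_deriv_on_nhds (c := 1 / 4) (Or.inr (by norm_num))
  obtain ⟨ρ, hρ, hball⟩ := Metric.mem_nhds_iff.1 (inter_mem hs hf)
  have hmem {a x : 𝔸} {r : ℝ} (hr : r < ρ) (ha : ‖a - 1‖ ≤ r) (hx : ‖x - 1‖ ≤ r) :
      (a, x) ∈ s ∧ (IsStrictlyPositive a → IsStrictlyPositive x →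
        CFC.log (cgeom a x⁻¹ʳ) = f (a, x)) := by
    apply hball
    rw [Metric.mem_ball, Prod.dist_eq, dist_eq_norm, dist_eq_norm]
    exact (max_le ha hx).trans_lt hr
  have hr0 : 0 < min (ρ / 2) (1 / 2) := by positivity
  have hrρ : min (ρ / 2) (1 / 2) < ρ := (min_le_left _ _).trans_lt (by linarith)
  refine ⟨min (ρ / 2) (1 / 2), hr0, min_le_right _ _, ?_, ?_⟩
  · intro a x y pa px py ha hx hy
    obtain ⟨mx, ex⟩ := hmem hrρ ha hx
    obtain ⟨my, ey⟩ := hmem hrρ ha hy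
    have h := happ _ mx _ my
    rw [ex pa px, ey pa py]
    have e1 : (1 / 2 : ℝ) • (x - y) = (1 / 2 : ℂ) • (x - y) := by
      rw [← Complex.coe_smul]; norm_num
    have e2 : ‖((a, x) : 𝔸 × 𝔸) - (a, y)‖ = ‖x - y‖ := by simp [Prod.norm_def]
    rw [e2] at h
    rw [e1]
    have e3 : ((1 / 2 : ℂ) • (ContinuousLinearMap.fst ℂ 𝔸 𝔸 - ContinuousLinearMap.snd ℂ 𝔸 𝔸))
        (((a, x) : 𝔸 × 𝔸) - (a, y)) = -((1 / 2 : ℂ) • (x - y)) := by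
      simp [← smul_neg]
    rw [e3, sub_neg_eq_add] at h
    simpa using h
  · generalize min (ρ / 2) (1 / 2) = r at *
    have hcont : Tendsto (fun a : 𝔸 => f (a, 1)) (𝓝 1) (𝓝 0) := by
      have h := df.continuousAt.tendsto
      rw [f1] at h
      exact h.comp (Continuous.tendsto (by fun_prop : Continuous fun a : 𝔸 => (a, (1 : 𝔸))) 1)
    obtain ⟨δ, hδ, hd⟩ := Metric.eventually_nhds_iff.1
      (hcont.eventually (Metric.closedBall_mem_nhds 0 (ε := r / 4) (by positivity)))
    refine ⟨min (δ / 2) r, by positivity, min_le_right _ _, fun a pa ha => ?_⟩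
    have h1 := hd (y := a) (by
      rw [dist_eq_norm]; exact (ha.trans (min_le_left _ _)).trans_lt (by linarith))
    rw [dist_zero_right] at h1
    rwa [(hmem (x := 1) hrρ (ha.trans (min_le_right _ _)) (by simpa using hr0.le)).2 pa (by simp)]

/-- The statement for strictly positive elements of an arbitrary unital C⋆-algebra. -/
theorem abstract_main {ι : Type*} [Fintype ι] {w : ι → ℝ} (hw : ∀ i, 0 < w i)
    (hw1 : ∑ i, w i = 1) : ∃ ε : ℝ, 1 < ε ∧ ∀ a : ι → 𝔸, (∀ i, IsStrictlyPositive (a i)) →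
      (∀ i, algebraMap ℝ 𝔸 ε⁻¹ ≤ a i ∧ a i ≤ algebraMap ℝ 𝔸 ε) →
      (∃! x : 𝔸, IsStrictlyPositive x ∧ ∑ i, w i • CFC.log (cgeom (a i) x⁻¹ʳ) = 0) ∧
      ∀ x : 𝔸, IsStrictlyPositive x → ∑ i, w i • CFC.log (cgeom (a i) x⁻¹ʳ) = 0 →
        algebraMap ℝ 𝔸 ε⁻¹ ≤ x ∧ x ≤ algebraMap ℝ 𝔸 ε := by
  obtain ⟨r, hr, hr2, hcontr, δ, hδ, hδr, hbase⟩ := exists_radius (𝔸 := 𝔸)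
  refine ⟨1 + δ / 3, by linarith, fun a pa ha => ?_⟩
  have hbounds := fun (x : 𝔸) (px : IsStrictlyPositive x) hsol =>
    solution_bounds hw hw1 pa px hsol (l := (1 + δ / 3)⁻¹) (u := 1 + δ / 3) (by positivity)
      (by positivity) ha
  refine ⟨?_, hbounds⟩
  have hnear {x : 𝔸} (h : algebraMap ℝ 𝔸 (1 + δ / 3)⁻¹ ≤ x ∧ x ≤ algebraMap ℝ 𝔸 (1 + δ / 3)) :
      ‖x - 1‖ ≤ δ := by
    have := norm_sub_one_le (by positivity) h.1 h.2
    linarith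
  have hna i : ‖a i - 1‖ ≤ δ := hnear (ha i)
  -- Solutions of `F x = 0` are the fixed points of `Ψ`; the factor `2` cancels the derivative `-1/2`
  -- of `F` at `1`, which makes `Ψ` a contraction near `1`.
  let F : 𝔸 → 𝔸 := fun x => ∑ i, w i • CFC.log (cgeom (a i) x⁻¹ʳ)
  let Ψ : 𝔸 → 𝔸 := fun x => x + (2 : ℝ) • F x
  have hsum (b : 𝔸) : ∑ i, w i • b = b := by rw [← Finset.sum_smul, hw1, one_smul]
  have hΨ {x y : 𝔸} (px : IsStrictlyPositive x) (py : IsStrictlyPositive y)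
      (hx : ‖x - 1‖ ≤ r) (hy : ‖y - 1‖ ≤ r) : ‖Ψ x - Ψ y‖ ≤ 1 / 2 * ‖x - y‖ := by
    have e : Ψ x - Ψ y = (2 : ℝ) • ∑ i, w i • (CFC.log (cgeom (a i) x⁻¹ʳ) -
        CFC.log (cgeom (a i) y⁻¹ʳ) + (1 / 2 : ℝ) • (x - y)) := by
      simp only [smul_add, Finset.sum_add_distrib, hsum]
      simp only [smul_sub, Finset.sum_sub_distrib, Ψ, F, smul_smul]
      norm_num
      abel
    rw [e, norm_smul]
    calc ‖(2 : ℝ)‖ * _ ≤ 2 * ∑ i, w i * (1 / 4 * ‖x - y‖) := by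
          rw [Real.norm_ofNat]
          gcongr
          refine (norm_sum_le _ _).trans (Finset.sum_le_sum fun i _ => ?_)
          rw [norm_smul, Real.norm_of_nonneg (hw i).le]
          exact mul_le_mul_of_nonneg_left (hcontr _ _ _ (pa i) px py ((hna i).trans hδr) hx hy)
            (hw i).le
      _ = 1 / 2 * ‖x - y‖ := by rw [← Finset.sum_mul, hw1]; ring
  have hF1 : ‖F 1‖ ≤ r / 4 := by
    calc ‖F 1‖ ≤ ∑ i, w i * (r / 4) := by
          refine (norm_sum_le _ _).trans (Finset.sum_le_sum fun i _ => ?_)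
          rw [norm_smul, Real.norm_of_nonneg (hw i).le]
          exact mul_le_mul_of_nonneg_left (hbase _ (pa i) (hna i)) (hw i).le
      _ = r / 4 := by rw [← Finset.sum_mul, hw1]; ring
  let s : Set 𝔸 := {x | IsSelfAdjoint x} ∩ Metric.closedBall 1 r
  have hs {x : 𝔸} (hx : x ∈ s) : IsStrictlyPositive x ∧ ‖x - 1‖ ≤ r := by
    have h2 : ‖x - 1‖ ≤ r := by simpa [dist_eq_norm] using hx.2
    exact ⟨isStrictlyPositive_of_norm_sub_one_le hx.1 (h2.trans hr2), h2⟩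
  have hsc : IsComplete s := by
    refine IsClosed.isComplete (IsClosed.inter ?_ Metric.isClosed_closedBall)
    exact isClosed_eq continuous_star continuous_id
  have h1s : (1 : 𝔸) ∈ s := ⟨.one _, Metric.mem_closedBall_self hr.le⟩
  have hmaps : Set.MapsTo Ψ s s := by
    intro x hx
    refine ⟨?_, ?_⟩
    · refine IsSelfAdjoint.add hx.1 (IsSelfAdjoint.smul (.all _) ?_)
      exact isSelfAdjoint_sum _ fun i _ => IsSelfAdjoint.smul (.all _) IsSelfAdjoint.log
    · rw [Metric.mem_closedBall, dist_eq_norm]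
      have h1 := hΨ (hs hx).1 (hs h1s).1 (hs hx).2 (hs h1s).2
      have h2 : Ψ x - 1 = (Ψ x - Ψ 1) + (2 : ℝ) • F 1 := by simp only [Ψ]; abel
      have h3 : ‖(2 : ℝ) • F 1‖ ≤ r / 2 := by
        rw [norm_smul, Real.norm_ofNat]; linarith
      rw [h2]
      have := (hs hx).2
      exact (norm_add_le _ _).trans (by linarith)
  have hcw : ContractingWith (1 / 2) (hmaps.restrict Ψ s s) := by
    refine ⟨by norm_num, LipschitzWith.of_dist_le_mul fun x y => ?_⟩
    have := hΨ (hs x.2).1 (hs y.2).1 (hs x.2).2 (hs y.2).2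
    rw [Subtype.dist_eq, Subtype.dist_eq, dist_eq_norm, dist_eq_norm]
    simpa using this
  obtain ⟨x, hx, hfix, -⟩ := hcw.exists_fixedPoint' hsc hmaps h1s (edist_ne_top _ _)
  have hFx : F x = 0 := by
    have h : x + (2 : ℝ) • F x = x := hfix
    simpa using h
  refine ⟨x, ⟨(hs hx).1, hFx⟩, ?_⟩
  rintro y ⟨py, hFy⟩
  have hy := (hnear (hbounds y py hFy)).trans hδr
  have h := hΨ py (hs hx).1 hy (hs hx).2
  have e1 : Ψ x = x := hfix
  have e2 : Ψ y = y := by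
    have : F y = 0 := hFy
    simp [Ψ, this]
  rw [e1, e2] at h
  have := norm_nonneg (y - x)
  exact sub_eq_zero.1 (norm_eq_zero.1 (by linarith))

end Abstract

/-! ### Transfer to matrices -/

section Transfer

open scoped MatrixOrder Matrix.Norms.L2Operator Ring

variable {n : ℕ}

lemma herm_eq_cfc (f : ℝ → ℝ) {A : Matrix (Fin n) (Fin n) ℂ} (hA : A.IsHermitian) :
    herm f A = cfc f A := by
  rw [herm, dif_pos hA, hA.cfc_eq f, Matrix.IsHermitian.cfc, Unitary.conjStarAlgAut_apply]
  rfl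

lemma msqrt_eq {A : Matrix (Fin n) (Fin n) ℂ} (hA : IsStrictlyPositive A) :
    msqrt A = CFC.sqrt A := by
  rw [msqrt, herm_eq_cfc _ hA.isSelfAdjoint, CFC.sqrt_eq_real_sqrt A hA.nonneg,
    cfcₙ_eq_cfc]

lemma mlog_eq {A : Matrix (Fin n) (Fin n) ℂ} (hA : IsStrictlyPositive A) :
    mlog A = CFC.log A :=
  herm_eq_cfc _ hA.isSelfAdjoint

lemma geom_eq {A B : Matrix (Fin n) (Fin n) ℂ} (hA : IsStrictlyPositive A)
    (hB : IsStrictlyPositive B) : geom A B = cgeom A B := by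
  rw [geom, cgeom, msqrt_eq hA, Matrix.nonsing_inv_eq_ringInverse,
    msqrt_eq (cgeom_inner_pos hA hB)]

lemma mem_Gamma_iff {m : ℕ} {w : Fin m → ℝ} {A : Fin m → Matrix (Fin n) (Fin n) ℂ}
    (hA : ∀ i, (A i).PosDef) (X : Matrix (Fin n) (Fin n) ℂ) :
    X ∈ Gamma w A ↔
      IsStrictlyPositive X ∧ ∑ i, w i • CFC.log (cgeom (A i) X⁻¹ʳ) = 0 := by
  rw [Gamma, Set.mem_ofPred_eq, Matrix.isStrictlyPositive_iff_posDef]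
  refine and_congr_right fun hX => ?_
  have hX' : IsStrictlyPositive X⁻¹ʳ := hX.isStrictlyPositive.ringInverse
  have h i : mlog (geom (A i) X⁻¹) = CFC.log (cgeom (A i) X⁻¹ʳ) := by
    rw [Matrix.nonsing_inv_eq_ringInverse, geom_eq (hA i).isStrictlyPositive hX',
      mlog_eq (cgeom_pos (hA i).isStrictlyPositive hX')]
  simp_rw [h]

end Transfer

open scoped MatrixOrder Matrix.Norms.L2Operator in
theorem stmt2 {m n : ℕ} (w : Fin m → ℝ) (hw : ∀ i, 0 < w i) (hw1 : ∑ i, w i = 1) :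
    ∃ ε : ℝ, 1 < ε ∧
      ∀ A : Fin m → Matrix (Fin n) (Fin n) ℂ, (∀ i, (A i).PosDef) →
        (∀ i, (A i - ε⁻¹ • (1 : Matrix (Fin n) (Fin n) ℂ)).PosSemidef ∧
               (ε • (1 : Matrix (Fin n) (Fin n) ℂ) - A i).PosSemidef) →
        (∃! X : Matrix (Fin n) (Fin n) ℂ, X ∈ Gamma w A) ∧
        ∀ X ∈ Gamma w A,
          (X - ε⁻¹ • (1 : Matrix (Fin n) (Fin n) ℂ)).PosSemidef ∧
          (ε • (1 : Matrix (Fin n) (Fin n) ℂ) - X).PosSemidef := by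
  obtain ⟨ε, hε, H⟩ := abstract_main (𝔸 := Matrix (Fin n) (Fin n) ℂ) hw hw1
  refine ⟨ε, hε, fun A hA hb => ?_⟩
  have hmap (c : ℝ) : algebraMap ℝ (Matrix (Fin n) (Fin n) ℂ) c = c • 1 :=
    Algebra.algebraMap_eq_smul_one c
  obtain ⟨h1, h2⟩ := H A (fun i => (hA i).isStrictlyPositive) (fun i => by
    rw [hmap, hmap]; exact hb i)
  refine ⟨by simpa only [mem_Gamma_iff hA] using h1, fun X hX => ?_⟩
  rw [mem_Gamma_iff hA] at hX
  have h3 := h2 X hX.1 hX.2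
  rw [hmap, hmap] at h3
  exact h3
end

section
/- Let ω = (w₁,…,w_m) be a weight vector and let A₁,…,A_m be n×n positive definite complex matrices. If X ∈ Γ(ω; A₁,…,A_m), then det X = ∏ᵢ₌₁^m (det Aᵢ)^{wᵢ}, where det Aᵢ > 0 and the powers are real powers of positive real numbers. -/
/-!
The determinant of a positive definite matrix is the product of its eigenvalues, so
`tr (log A) = log (det A)` and `det (A^{1/2})² = det A`. The latter gives
`det (A ♯ B)² = det A * det B`. Taking traces in `∑ᵢ wᵢ log (Aᵢ ♯ X⁻¹) = 0` therefore yields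
`∑ᵢ wᵢ (log det Aᵢ - log det X) = 0`, and since the weights sum to one,
`log det X = ∑ᵢ wᵢ log det Aᵢ`; exponentiating gives the claim.
-/

open Matrix
open scoped ComplexOrder

lemma herm_posDef {n : ℕ} {f : ℝ → ℝ} (hf : ∀ x, 0 < x → 0 < f x)
    {A : Matrix (Fin n) (Fin n) ℂ} (hA : A.PosDef) : (herm f A).PosDef := by
  rw [herm, dif_pos hA.1]
  have hU : IsUnit (hA.1.eigenvectorUnitary : Matrix (Fin n) (Fin n) ℂ) :=
    (Unitary.toUnits hA.1.eigenvectorUnitary).isUnit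
  rw [hU.posDef_star_right_conjugate_iff, posDef_diagonal_iff]
  intro i
  exact_mod_cast hf _ (hA.eigenvalues_pos i)

lemma det_herm {n : ℕ} (f : ℝ → ℝ) {A : Matrix (Fin n) (Fin n) ℂ} (hA : A.IsHermitian) :
    (herm f A).det = ((∏ i, f (hA.eigenvalues i) : ℝ) : ℂ) := by
  have hU : star (hA.eigenvectorUnitary : Matrix (Fin n) (Fin n) ℂ) *
      (hA.eigenvectorUnitary : Matrix (Fin n) (Fin n) ℂ) = 1 := by simp
  rw [herm, dif_pos hA, det_mul_comm, ← mul_assoc, hU, one_mul, det_diagonal]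
  push_cast
  rfl

lemma trace_herm {n : ℕ} (f : ℝ → ℝ) {A : Matrix (Fin n) (Fin n) ℂ} (hA : A.IsHermitian) :
    (herm f A).trace = ((∑ i, f (hA.eigenvalues i) : ℝ) : ℂ) := by
  have hU : star (hA.eigenvectorUnitary : Matrix (Fin n) (Fin n) ℂ) *
      (hA.eigenvectorUnitary : Matrix (Fin n) (Fin n) ℂ) = 1 := by simp
  rw [herm, dif_pos hA, trace_mul_comm, ← mul_assoc, hU, one_mul, trace_diagonal]
  push_cast
  rfl

lemma det_re_pos {n : ℕ} {A : Matrix (Fin n) (Fin n) ℂ} (hA : A.PosDef) : 0 < A.det.re :=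
  (Complex.pos_iff.1 hA.det_pos).1

lemma det_eq_re {n : ℕ} {A : Matrix (Fin n) (Fin n) ℂ} (hA : A.PosDef) :
    A.det = (A.det.re : ℂ) :=
  Complex.ext rfl (by simpa using (Complex.pos_iff.1 hA.det_pos).2.symm)

lemma trace_mlog {n : ℕ} {A : Matrix (Fin n) (Fin n) ℂ} (hA : A.PosDef) :
    (mlog A).trace = (Real.log A.det.re : ℂ) := by
  have h : A.det.re = ∏ i, hA.1.eigenvalues i := by
    rw [hA.1.det_eq_prod_eigenvalues]
    norm_cast
  rw [mlog, trace_herm _ hA.1, h, Real.log_prod (fun i _ => (hA.eigenvalues_pos i).ne')]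

lemma det_msqrt_sq {n : ℕ} {A : Matrix (Fin n) (Fin n) ℂ} (hA : A.PosDef) :
    (msqrt A).det ^ 2 = A.det := by
  rw [msqrt, det_herm _ hA.1, hA.1.det_eq_prod_eigenvalues, ← Complex.ofReal_pow,
    ← Finset.prod_pow, Finset.prod_congr rfl
      (fun i _ => Real.sq_sqrt (hA.eigenvalues_pos i).le)]
  push_cast
  rfl

lemma msqrt_posDef {n : ℕ} {A : Matrix (Fin n) (Fin n) ℂ} (hA : A.PosDef) : (msqrt A).PosDef :=
  herm_posDef (fun _ => Real.sqrt_pos.2) hA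

lemma conj_posDef {n : ℕ} {S B : Matrix (Fin n) (Fin n) ℂ} (hS : S.PosDef) (hB : B.PosDef) :
    (S * B * S).PosDef := by
  have h := (hS.isUnit.posDef_star_right_conjugate_iff (x := B)).2 hB
  rwa [star_eq_conjTranspose, hS.1.eq] at h

lemma geom_posDef {n : ℕ} {A B : Matrix (Fin n) (Fin n) ℂ} (hA : A.PosDef) (hB : B.PosDef) :
    (geom A B).PosDef :=
  conj_posDef (msqrt_posDef hA) (msqrt_posDef (conj_posDef (msqrt_posDef hA).inv hB))

lemma det_geom_sq {n : ℕ} {A B : Matrix (Fin n) (Fin n) ℂ} (hA : A.PosDef) (hB : B.PosDef) :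
    (geom A B).det ^ 2 = A.det * B.det := by
  have hS := msqrt_posDef hA
  have h1 := det_msqrt_sq hA
  have h2 := det_msqrt_sq (conj_posDef hS.inv hB)
  have h0 : (msqrt A).det ≠ 0 := hS.det_pos.ne'
  rw [geom, det_mul, det_mul, mul_pow, mul_pow, h2, det_mul, det_mul, det_nonsing_inv,
    Ring.inverse_eq_inv', ← h1]
  field_simp

lemma two_mul_log_det_geom {n : ℕ} {A X : Matrix (Fin n) (Fin n) ℂ} (hA : A.PosDef)
    (hX : X.PosDef) :
    2 * Real.log (geom A X⁻¹).det.re = Real.log A.det.re - Real.log X.det.re := by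
  have h := det_geom_sq hA hX.inv
  rw [det_nonsing_inv, Ring.inverse_eq_inv', det_eq_re (geom_posDef hA hX.inv), det_eq_re hA,
    det_eq_re hX] at h
  have h' : (geom A X⁻¹).det.re ^ 2 = A.det.re / X.det.re := by
    rw [div_eq_mul_inv]
    exact_mod_cast h
  rw [← Real.log_div (det_re_pos hA).ne' (det_re_pos hX).ne', ← h', Real.log_pow]
  norm_num

theorem stmt8 {m n : ℕ} (w : Fin m → ℝ) (hw : ∀ i, 0 < w i) (hw1 : ∑ i, w i = 1)
    (A : Fin m → Matrix (Fin n) (Fin n) ℂ) (hA : ∀ i, (A i).PosDef) :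
    ∀ X ∈ Gamma w A,
      (∀ i, 0 < (A i).det.re) ∧
      X.det = ((∏ i, ((A i).det.re) ^ (w i) : ℝ) : ℂ) := by
  rintro X ⟨hX, hsum⟩
  refine ⟨fun i => det_re_pos (hA i), ?_⟩
  have ht : ∑ i, w i * Real.log (geom (A i) X⁻¹).det.re = 0 := by
    have h := congrArg Matrix.trace hsum
    simp only [trace_sum, trace_smul, trace_zero,
      trace_mlog (geom_posDef (hA _) hX.inv), Complex.real_smul] at h
    exact_mod_cast h
  have hlog : Real.log X.det.re = ∑ i, w i * Real.log (A i).det.re := by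
    have h : ∑ i, w i * (Real.log (A i).det.re - Real.log X.det.re) = 0 := by
      simp only [← two_mul_log_det_geom (hA _) hX, mul_left_comm _ (2 : ℝ), ← Finset.mul_sum, ht,
        mul_zero]
    simp only [mul_sub, Finset.sum_sub_distrib, ← Finset.sum_mul, hw1, one_mul] at h
    linarith
  rw [det_eq_re hX, ← Real.exp_log (det_re_pos hX), hlog, Real.exp_sum]
  congr 1
  refine Finset.prod_congr rfl fun i _ => ?_
  rw [Real.rpow_def_of_pos (det_re_pos (hA i)), mul_comm]
end
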